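/- (Theorem 3, deterministic form: tightness of the SDR for the single-BS power-minimization problem.) Consider the semidefinite program: minimize (∑_{k=1}^K tr(F_k))/P over Hermitian positive-semidefinite matrices F_1, …, F_K ∈ ℂ^{N_t×N_t} and q > 0, subject to (i) C(q) ≤ ε; (ii) η (∑_{j≠k} h_kᴴ F_j h_k + σ²) ≤ h_kᴴ F_k h_k for all k; (iii) q ≤ aᵀ (∑_{k=1}^K F_k) ā. Suppose this problem is feasible and its optimal value is attained, and suppose ā does not lie in the linear span of { h_1, …, h_K }. Then there exists an optimal solution in which every F_k has rank at most one. -/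

import Mathlib

open Matrix ComplexOrder Finset

/-- The CRLB `C(q) = tr((Λ (q D) Λᵀ)⁻¹)`. -/
noncomputable def Cq {N : ℕ} (Λ : Matrix (Fin 2) (Fin N) ℝ)
    (D : Matrix (Fin N) (Fin N) ℝ) (q : ℝ) : ℝ :=
  ((Λ * (q • D) * Λᵀ)⁻¹).trace

/-- Feasibility for the single-BS power-minimization SDR problem (25). -/
def PMinFeas {K Nt N : ℕ} (h : Fin K → Fin Nt → ℂ) (a : Fin Nt → ℂ)
    (Λ : Matrix (Fin 2) (Fin N) ℝ) (D : Matrix (Fin N) (Fin N) ℝ)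
    (σ2 η ε : ℝ)
    (F : Fin K → Matrix (Fin Nt) (Fin Nt) ℂ) (q : ℝ) : Prop :=
  (∀ k, (F k).PosSemidef) ∧ 0 < q ∧
  -- (i) CRLB constraint
  Cq Λ D q ≤ ε ∧
  -- (ii) SINR constraints
  (∀ k, η * ((∑ j ∈ Finset.univ.erase k, (star (h k) ⬝ᵥ (F j).mulVec (h k)).re) + σ2)
      ≤ (star (h k) ⬝ᵥ (F k).mulVec (h k)).re) ∧
  -- (iii) sensing-gain constraint
  q ≤ (a ⬝ᵥ (∑ k, F k).mulVec (star a)).re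

/-!
For fixed `q` the problem is a block semidefinite program with `K + 1` linear inequalities. Write
`Fₖ = Bₖ Bₖᴴ` with `Bₖ` of full column rank `rₖ`. The tuples `(Bₖ Hₖ Bₖᴴ)ₖ` with `Hₖ` Hermitian form
a real space of dimension `∑ rₖ²`; if this exceeds `K + 1`, some nonzero such tuple is annihilated
by every constraint functional, and `F` can be moved both ways along it. Extreme feasible points
therefore satisfy the Pataki–Barvinok bound `∑ rₖ² ≤ K + 1`. The trace dominates the Frobenius norm
on positive semidefinite matrices, so the optimal face is compact and, by Krein–Milman, contains an
extreme point. The SINR constraints force every `Fₖ ≠ 0`, and `K` positive integers whose squares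
sum to at most `K + 1` are all equal to one.

Fixing `q` costs nothing: `C(q) = C(1) / q`, so any feasible point stays feasible, with the same
objective, when `q` is lowered to `C(1) / ε`.
-/

open scoped Topology
open Filter Module

section Hermitian

theorem two_mul_finrank_selfAdjoint (A : Type*) [AddCommGroup A] [Module ℂ A] [StarAddMonoid A]
    [StarModule ℂ A] [Module.Finite ℝ A] : 2 * finrank ℝ (selfAdjoint A) = finrank ℝ A := by
  have hrank := (imaginaryPart (A := A)).finrank_range_add_finrank_ker
  rw [ker_imaginaryPart, LinearMap.range_eq_top.2 imaginaryPart_surjective, finrank_top] at hrank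
  exact (two_mul _).trans hrank

theorem finrank_selfAdjoint_matrix (n : Type*) [Fintype n] :
    finrank ℝ (selfAdjoint (Matrix n n ℂ)) = Fintype.card n ^ 2 := by
  have hdim := two_mul_finrank_selfAdjoint (Matrix n n ℂ)
  rw [finrank_matrix, Complex.finrank_real_complex] at hdim
  linarith [sq (Fintype.card n)]

open scoped MatrixOrder Matrix.Norms.L2Operator in
theorem eventually_posSemidef_one_add_smul {n : Type*} [Finite n] [DecidableEq n]
    {H : Matrix n n ℂ} (hH : H.IsHermitian) : ∀ᶠ t : ℝ in 𝓝 0, (1 + t • H).PosSemidef := by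
  have := Fintype.ofFinite n
  have hnorm : Tendsto (fun t : ℝ ↦ ‖t • H‖) (𝓝 0) (𝓝 0) := by
    simpa using (by fun_prop : Continuous fun t : ℝ ↦ ‖t • H‖).tendsto 0
  filter_upwards [hnorm.eventually_le_const one_pos] with t ht
  have hsa : IsSelfAdjoint (t • H) := (IsSelfAdjoint.all t).smul hH
  have hlower : -algebraMap ℝ (Matrix n n ℂ) 1 ≤ t • H :=
    (neg_le_neg (algebraMap_mono _ ht)).trans hsa.neg_algebraMap_norm_le_self
  rw [map_one] at hlower
  exact nonneg_iff_posSemidef.1 (neg_le_iff_add_nonneg'.1 hlower)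

end Hermitian

section PosSemidef

theorem submatrix_mul_diagonal_mul_submatrix {R l m n r : Type*} [Semiring R] [Fintype n]
    [DecidableEq n] [Fintype r] [DecidableEq r] (A : Matrix l n R) (d : n → R) (B : Matrix n m R)
    (e : r ≃ {i // d i ≠ 0}) :
    A.submatrix id (fun k ↦ e k) * diagonal (fun k ↦ d (e k)) * B.submatrix (fun k ↦ e k) id
      = A * diagonal d * B := by
  classical
  ext i j
  rw [mul_apply, mul_apply]
  simp only [mul_diagonal, submatrix_apply, id]
  calc ∑ k, A i (e k) * d (e k) * B (e k) j
      = ∑ k : {k // d k ≠ 0}, A i k * d k * B k j :=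
        e.sum_comp fun k : {k // d k ≠ 0} ↦ A i k * d k * B k j
    _ = ∑ k with d k ≠ 0, A i k * d k * B k j :=
        (sum_subtype _ (fun _ ↦ mem_filter_univ _) fun k ↦ A i k * d k * B k j).symm
    _ = ∑ k, A i k * d k * B k j := sum_filter_of_ne fun k _ hk hd ↦ hk (by simp [hd])

theorem matrix_rank_eq_zero_iff {R m n : Type*} [Field R] [Fintype n] {A : Matrix m n R} :
    A.rank = 0 ↔ A = 0 := by
  classical
  rw [Matrix.rank, Submodule.finrank_eq_zero, LinearMap.range_eq_bot]
  exact (toLin' (R := R) (m := m) (n := n)).map_eq_zero_iff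

variable {𝕜 m n : Type*} [RCLike 𝕜] [Fintype m] [Fintype n]

theorem exists_mul_conjTranspose_eq_of_posSemidef {F : Matrix n n 𝕜} (hF : F.PosSemidef) :
    ∃ (B : Matrix n (Fin F.rank) 𝕜) (L : Matrix (Fin F.rank) n 𝕜), L * B = 1 ∧ B * Bᴴ = F := by
  classical
  set U : Matrix n n 𝕜 := ↑hF.isHermitian.eigenvectorUnitary
  let μ : n → 𝕜 := fun i ↦ hF.isHermitian.eigenvalues i
  have hUU : Uᴴ * U = 1 := by simp [U, ← star_eq_conjTranspose]
  have hF_eq : F = U * diagonal μ * Uᴴ := by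
    simpa [Unitary.conjStarAlgAut_apply] using! hF.isHermitian.spectral_theorem
  have hcard : Fintype.card {i // μ i ≠ 0} = F.rank := by
    simpa [μ] using hF.isHermitian.rank_eq_card_non_zero_eigs.symm
  let e : Fin F.rank ≃ {i // μ i ≠ 0} := (Fintype.equivFinOfCardEq hcard).symm
  let V : Matrix n (Fin F.rank) 𝕜 := U.submatrix id fun k ↦ e k
  have hVV : Vᴴ * V = 1 := by
    rw [conjTranspose_submatrix, ← submatrix_mul _ _ _ _ _ Function.bijective_id, hUU]
    exact submatrix_one _ (Subtype.val_injective.comp e.injective)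
  let s : Fin F.rank → 𝕜 := fun k ↦ (√(hF.isHermitian.eigenvalues (e k)) : ℝ)
  have hs_mul (k) : s k * star (s k) = μ (e k) := by
    simp [s, μ, ← RCLike.ofReal_mul, Real.mul_self_sqrt (hF.eigenvalues_nonneg _)]
  have hs (k) : s k ≠ 0 := left_ne_zero_of_mul (hs_mul k ▸ (e k).2)
  refine ⟨V * diagonal s, diagonal s⁻¹ * Vᴴ, ?_, ?_⟩
  · rw [Matrix.mul_assoc, ← Matrix.mul_assoc Vᴴ, hVV, Matrix.one_mul, diagonal_mul_diagonal]
    simp [hs]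
  · calc V * diagonal s * (V * diagonal s)ᴴ
        = V * (diagonal s * diagonal (star s)) * Vᴴ := by
          rw [conjTranspose_mul, diagonal_conjTranspose]
          simp only [Matrix.mul_assoc]
      _ = V * diagonal (fun k ↦ μ (e k)) * Vᴴ := by
          rw [diagonal_mul_diagonal]
          exact congrArg (fun d ↦ V * diagonal d * Vᴴ) (funext hs_mul)
      _ = U * diagonal μ * Uᴴ := submatrix_mul_diagonal_mul_submatrix U μ Uᴴ e
      _ = F := hF_eq.symm

open scoped Matrix.Norms.Frobenius in
theorem frobenius_norm_sq_eq_re_trace (B : Matrix m n 𝕜) : ‖B‖ ^ 2 = RCLike.re (B * Bᴴ).trace := by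
  rw [frobenius_norm_def, ← Real.sqrt_eq_rpow, Real.sq_sqrt (by positivity)]
  simp [trace, mul_apply, RCLike.mul_conj]

open scoped Matrix.Norms.Frobenius in
theorem frobenius_norm_le_re_trace {F : Matrix n n 𝕜} (hF : F.PosSemidef) :
    ‖F‖ ≤ RCLike.re F.trace := by
  obtain ⟨B, -, -, hB⟩ := exists_mul_conjTranspose_eq_of_posSemidef hF
  calc ‖F‖ = ‖B * Bᴴ‖ := by rw [hB]
    _ ≤ ‖B‖ * ‖Bᴴ‖ := frobenius_norm_mul B Bᴴ
    _ = RCLike.re (B * Bᴴ).trace := by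
      rw [frobenius_norm_conjTranspose, ← sq, frobenius_norm_sq_eq_re_trace]
    _ = RCLike.re F.trace := by rw [hB]

open scoped MatrixOrder Matrix.Norms.L2Operator in
theorem isClosed_setOf_posSemidef (n : Type*) [Finite n] :
    IsClosed {F : Matrix n n ℂ | F.PosSemidef} := by
  classical
  have := Fintype.ofFinite n
  simpa only [nonneg_iff_posSemidef] using CStarAlgebra.isClosed_nonneg (A := Matrix n n ℂ)

instance instLocallyConvexSpaceMatrix {m n : Type*} : LocallyConvexSpace ℝ (Matrix m n ℂ) :=
  inferInstanceAs (LocallyConvexSpace ℝ (m → n → ℂ))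

end PosSemidef

section BlockSDP

variable {ι : Type*} {n : ι → Type*} {W : Type*} [AddCommGroup W] [Module ℝ W]

/-- The feasible set of a block semidefinite program: tuples of positive semidefinite matrices
whose image under the real-linear map `Φ` lies in `C`. -/
def sdpFeasible (Φ : (∀ k, Matrix (n k) (n k) ℂ) →ₗ[ℝ] W) (C : Set W) :
    Set (∀ k, Matrix (n k) (n k) ℂ) :=
  {F | (∀ k, (F k).PosSemidef) ∧ Φ F ∈ C}

theorem isClosed_sdpFeasible [TopologicalSpace W] [IsTopologicalAddGroup W] [ContinuousSMul ℝ W]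
    [Finite ι] [∀ k, Finite (n k)] (Φ : (∀ k, Matrix (n k) (n k) ℂ) →ₗ[ℝ] W) {C : Set W}
    (hC : IsClosed C) : IsClosed (sdpFeasible Φ C) := by
  have hpsd : IsClosed {F : ∀ k, Matrix (n k) (n k) ℂ | ∀ k, (F k).PosSemidef} := by
    rw [Set.ofPred_forall]
    exact isClosed_iInter fun k ↦ (isClosed_setOf_posSemidef (n k)).preimage
      (continuous_apply (A := fun k ↦ Matrix (n k) (n k) ℂ) k)
  exact hpsd.inter (hC.preimage Φ.continuous_of_finiteDimensional)

/-- The congruence `H ↦ (B k * H k * (B k)ᴴ)ₖ` on tuples of Hermitian matrices. When `B k` is a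
full-column-rank factor of a positive semidefinite `F k = B k * (B k)ᴴ`, its values are directions
along which the tuple `F` can move both ways inside the positive semidefinite cone. -/
def hermitianCongr {r : ι → Type*} [∀ k, Fintype (r k)] (B : ∀ k, Matrix (n k) (r k) ℂ) :
    (∀ k, selfAdjoint (Matrix (r k) (r k) ℂ)) →ₗ[ℝ] ∀ k, Matrix (n k) (n k) ℂ where
  toFun H k := B k * (H k : Matrix (r k) (r k) ℂ) * (B k)ᴴ
  map_add' H H' := by ext1 k; simp [Matrix.mul_add, Matrix.add_mul]
  map_smul' c H := by ext1 k; simp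

variable [∀ k, Fintype (n k)]

theorem hermitianCongr_injective {r : ι → Type*} [∀ k, Fintype (r k)] [∀ k, DecidableEq (r k)]
    {B : ∀ k, Matrix (n k) (r k) ℂ} {L : ∀ k, Matrix (r k) (n k) ℂ} (hLB : ∀ k, L k * B k = 1) :
    Function.Injective (hermitianCongr B) := by
  intro H H' hHH'
  ext1 k
  apply Subtype.ext
  have hBL : (B k)ᴴ * (L k)ᴴ = 1 := by rw [← conjTranspose_mul, hLB, conjTranspose_one]
  have hcancel (X : Matrix (r k) (r k) ℂ) : L k * (B k * X * (B k)ᴴ) * (L k)ᴴ = X := by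
    rw [Matrix.mul_assoc (B k), ← Matrix.mul_assoc (L k), hLB, Matrix.one_mul, Matrix.mul_assoc,
      hBL, Matrix.mul_one]
  rw [← hcancel (H k), ← hcancel (H' k)]
  exact congrArg (fun X ↦ L k * X * (L k)ᴴ) (congrFun hHH' k)

variable [Fintype ι]

theorem exists_ne_zero_eventually_posSemidef [Module.Finite ℝ W]
    (Φ : (∀ k, Matrix (n k) (n k) ℂ) →ₗ[ℝ] W) {F : ∀ k, Matrix (n k) (n k) ℂ}
    (hF : ∀ k, (F k).PosSemidef) (hrank : finrank ℝ W < ∑ k, (F k).rank ^ 2) :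
    ∃ X ≠ 0, Φ X = 0 ∧ ∀ᶠ t : ℝ in 𝓝 0, ∀ k, (F k + t • X k).PosSemidef := by
  choose B L hLB hBB using fun k ↦ exists_mul_conjTranspose_eq_of_posSemidef (hF k)
  have (k : ι) : Module.Finite ℝ (selfAdjoint (Matrix (Fin (F k).rank) (Fin (F k).rank) ℂ)) :=
    inferInstanceAs (Module.Finite ℝ (selfAdjoint.submodule ℝ _))
  have hker : LinearMap.ker (Φ ∘ₗ hermitianCongr B) ≠ ⊥ :=
    LinearMap.ker_ne_bot_of_finrank_lt (by
      simpa [finrank_pi_fintype, finrank_selfAdjoint_matrix] using hrank)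
  obtain ⟨H, hH, hH0⟩ := (Submodule.ne_bot_iff _).1 hker
  refine ⟨hermitianCongr B H, (map_ne_zero_iff _ (hermitianCongr_injective hLB)).2 hH0, hH, ?_⟩
  have hone (k) := eventually_posSemidef_one_add_smul (H k).2
  filter_upwards [eventually_all.2 hone] with t ht k
  have hfactor : F k + t • hermitianCongr B H k
      = B k * (1 + t • (H k : Matrix (Fin (F k).rank) (Fin (F k).rank) ℂ)) * (B k)ᴴ := by
    simp [hermitianCongr, Matrix.mul_add, Matrix.add_mul, hBB]
  exact hfactor ▸ (ht k).mul_mul_conjTranspose_same (B k)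

theorem sum_sq_rank_le_finrank_of_mem_extremePoints [Module.Finite ℝ W]
    {Φ : (∀ k, Matrix (n k) (n k) ℂ) →ₗ[ℝ] W} {C : Set W} {F : ∀ k, Matrix (n k) (n k) ℂ}
    (hF : F ∈ (sdpFeasible Φ C).extremePoints ℝ) : ∑ k, (F k).rank ^ 2 ≤ finrank ℝ W := by
  by_contra! hrank
  obtain ⟨X, hX0, hΦX, hX⟩ := exists_ne_zero_eventually_posSemidef Φ hF.1.1 hrank
  have hfeas : ∀ᶠ t : ℝ in 𝓝 0, F + t • X ∈ sdpFeasible Φ C :=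
    hX.mono fun t ht ↦ ⟨ht, by simpa [hΦX] using hF.1.2⟩
  have hfeas_neg : ∀ᶠ t : ℝ in 𝓝 0, F + (-t) • X ∈ sdpFeasible Φ C :=
    (continuous_neg.tendsto' 0 0 neg_zero).eventually hfeas
  obtain ⟨t, ⟨hpos, hneg⟩, ht⟩ :=
    (((hfeas.and hfeas_neg).filter_mono nhdsWithin_le_nhds).and self_mem_nhdsWithin).exists
      (f := 𝓝[>] (0 : ℝ))
  have hmid : F ∈ openSegment ℝ (F + t • X) (F + (-t) • X) :=
    ⟨1 / 2, 1 / 2, by norm_num, by norm_num, by norm_num, by module⟩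
  have hzero : F + t • X = F := hF.2 hpos hneg hmid
  exact (smul_ne_zero (ne_of_gt ht) hX0) (add_eq_left.1 hzero)

/-- The objective `F ↦ ∑ₖ tr Fₖ`, real on Hermitian tuples, as a real-valued linear functional. -/
def totalTrace (n : ι → Type*) [∀ k, Fintype (n k)] :
    (∀ k, Matrix (n k) (n k) ℂ) →ₗ[ℝ] ℝ where
  toFun F := (∑ k, (F k).trace).re
  map_add' F G := by simp [trace_add, Finset.sum_add_distrib]
  map_smul' c F := by simp [trace_smul, Finset.mul_sum]

variable [TopologicalSpace W] [IsTopologicalAddGroup W] [ContinuousSMul ℝ W]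

open scoped Matrix.Norms.Frobenius in
theorem isCompact_sdpFeasible_inter_totalTrace_le (Φ : (∀ k, Matrix (n k) (n k) ℂ) →ₗ[ℝ] W)
    {C : Set W} (hC : IsClosed C) (T : ℝ) :
    IsCompact (sdpFeasible Φ C ∩ {F | totalTrace n F ≤ T}) := by
  have hclosed : IsClosed {F | totalTrace n F ≤ T} :=
    isClosed_Iic.preimage (totalTrace n).continuous_of_finiteDimensional
  have := FiniteDimensional.proper ℝ (∀ k, Matrix (n k) (n k) ℂ)
  refine (isCompact_closedBall (0 : ∀ k, Matrix (n k) (n k) ℂ) T).of_isClosed_subset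
    ((isClosed_sdpFeasible Φ hC).inter hclosed) fun F hF ↦ ?_
  have htrace (k) : 0 ≤ (F k).trace.re := (Complex.le_def.1 (hF.1.1 k).trace_nonneg).1
  have hsum : ∑ k, (F k).trace.re ≤ T := (Complex.re_sum _ _).symm.trans_le hF.2
  have hk (k) : (F k).trace.re ≤ T :=
    (single_le_sum (f := fun k ↦ (F k).trace.re) (fun j _ ↦ htrace j) (mem_univ k)).trans hsum
  have hT : 0 ≤ T := (sum_nonneg fun k _ ↦ htrace k).trans hsum
  rw [mem_closedBall_zero_iff, pi_norm_le_iff_of_nonneg hT]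
  exact fun k ↦ (frobenius_norm_le_re_trace (hF.1.1 k)).trans (hk k)

theorem exists_isMinOn_totalTrace (Φ : (∀ k, Matrix (n k) (n k) ℂ) →ₗ[ℝ] W) {C : Set W}
    (hC : IsClosed C) (hne : (sdpFeasible Φ C).Nonempty) :
    ∃ F ∈ sdpFeasible Φ C, IsMinOn (totalTrace n) (sdpFeasible Φ C) F := by
  obtain ⟨G, hG⟩ := hne
  have hcont : Continuous (totalTrace n) := (totalTrace n).continuous_of_finiteDimensional
  obtain ⟨F, hF, hmin⟩ := (isCompact_sdpFeasible_inter_totalTrace_le Φ hC (totalTrace n G))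
    |>.exists_isMinOn ⟨G, hG, le_refl (totalTrace n G)⟩ hcont.continuousOn
  refine ⟨F, hF.1, fun F' hF' ↦ ?_⟩
  rcases le_total (totalTrace n F') (totalTrace n G) with hle | hge
  · exact hmin ⟨hF', hle⟩
  · exact le_trans hF.2 hge

theorem exists_mem_extremePoints_isMinOn_totalTrace
    (Φ : (∀ k, Matrix (n k) (n k) ℂ) →ₗ[ℝ] W) {C : Set W} (hC : IsClosed C)
    (hne : (sdpFeasible Φ C).Nonempty) :
    ∃ F ∈ (sdpFeasible Φ C).extremePoints ℝ, IsMinOn (totalTrace n) (sdpFeasible Φ C) F := by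
  obtain ⟨F₀, hF₀, hmin₀⟩ := exists_isMinOn_totalTrace Φ hC hne
  set face := (-(totalTrace n).toContinuousLinearMap).toExposed (sdpFeasible Φ C)
  have hface : face = sdpFeasible Φ C ∩ {F | totalTrace n F ≤ totalTrace n F₀} := by
    ext F
    refine and_congr_right fun _ ↦ ⟨fun h ↦ ?_, fun h G hG ↦ ?_⟩
    · simpa using! h F₀ hF₀
    · simpa using! le_trans h (hmin₀ hG)
  have hcompact : IsCompact face :=
    hface ▸ isCompact_sdpFeasible_inter_totalTrace_le Φ hC (totalTrace n F₀)
  have hface_ne : face.Nonempty := ⟨F₀, hface ▸ ⟨hF₀, le_refl (totalTrace n F₀)⟩⟩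
  have hextreme : IsExtreme ℝ (sdpFeasible Φ C) face :=
    ContinuousLinearMap.toExposed.isExposed.isExtreme
  obtain ⟨F, hF⟩ := hcompact.extremePoints_nonempty hface_ne
  exact ⟨F, hextreme.extremePoints_subset_extremePoints hF,
    fun G hG ↦ by simpa using hF.1.2 G hG⟩

end BlockSDP

section PowerMinimization

theorem eq_one_of_sum_sq_lt {ι : Type*} [Fintype ι] {r : ι → ℕ} (hr : ∀ k, r k ≠ 0)
    (hsum : ∑ k, r k ^ 2 < Fintype.card ι + 3) (k : ι) : r k = 1 := by
  classical
  have hrest : #(univ.erase k) • 1 ≤ ∑ j ∈ univ.erase k, r j ^ 2 :=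
    card_nsmul_le_sum _ _ _ fun j _ ↦ Nat.one_le_pow _ _ (Nat.pos_of_ne_zero (hr j))
  have hcard : #(univ.erase k) + 1 = Fintype.card ι := card_erase_add_one (mem_univ k)
  have hsplit := add_sum_erase univ (fun j ↦ r j ^ 2) (mem_univ k)
  have hlt_two : r k < 2 := by
    refine lt_of_pow_lt_pow_left₀ 2 zero_le_two ?_
    rw [smul_eq_mul, mul_one] at hrest
    omega
  have hpos := Nat.pos_of_ne_zero (hr k)
  omega

/-- The quadratic form `v ↦ vᴴ M v`, read as a real-linear functional of the matrix `M`; the real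
part is the whole value when `M` is Hermitian. -/
def quadForm {n : Type*} [Fintype n] (v : n → ℂ) : Matrix n n ℂ →ₗ[ℝ] ℝ where
  toFun M := (star v ⬝ᵥ M *ᵥ v).re
  map_add' M M' := by simp [add_mulVec]
  map_smul' c M := by simp [smul_mulVec]

variable {K Nt N : ℕ}

/-- The SINR margins `h_kᴴ F_k h_k - η ∑_{j ≠ k} h_kᴴ F_j h_k` together with the sensing gain
`aᵀ (∑ₖ F_k) ā`. For fixed `q` the constraints (ii) and (iii) say that this `K + 1`-dimensional
vector dominates `(η σ², …, η σ², q)`. -/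
noncomputable def constraintMap (h : Fin K → Fin Nt → ℂ) (a : Fin Nt → ℂ) (η : ℝ) :
    (Fin K → Matrix (Fin Nt) (Fin Nt) ℂ) →ₗ[ℝ] (Fin K → ℝ) × ℝ :=
  (LinearMap.pi fun k ↦ quadForm (h k) ∘ₗ LinearMap.proj k
      - η • ∑ j ∈ univ.erase k, quadForm (h k) ∘ₗ LinearMap.proj j).prod
    (quadForm (star a) ∘ₗ ∑ k, LinearMap.proj k)

variable {h : Fin K → Fin Nt → ℂ} {a : Fin Nt → ℂ} {σ2 η ε : ℝ}
  {Λ : Matrix (Fin 2) (Fin N) ℝ} {D : Matrix (Fin N) (Fin N) ℝ}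
  {F : Fin K → Matrix (Fin Nt) (Fin Nt) ℂ} {q : ℝ}

theorem pMinFeas_iff_mem_sdpFeasible :
    PMinFeas h a Λ D σ2 η ε F q ↔
      0 < q ∧ Cq Λ D q ≤ ε ∧
        F ∈ sdpFeasible (constraintMap h a η) (Set.Ici (fun _ ↦ η * σ2, q)) := by
  have hsinr : (∀ k, η * σ2 ≤ (constraintMap h a η F).1 k) ↔
      ∀ k, η * ((∑ j ∈ univ.erase k, (star (h k) ⬝ᵥ F j *ᵥ h k).re) + σ2)
        ≤ (star (h k) ⬝ᵥ F k *ᵥ h k).re := by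
    simp [constraintMap, quadForm, le_sub_iff_add_le, mul_add, add_comm]
  have hgain : (constraintMap h a η F).2 = (a ⬝ᵥ (∑ k, F k) *ᵥ star a).re := by
    simp [constraintMap, quadForm]
  rw [PMinFeas, ← hsinr, ← hgain]
  simp only [sdpFeasible, Set.mem_ofPred_eq, Set.mem_Ici, Prod.le_def, Pi.le_def]
  tauto

theorem Cq_eq_div (hΛD : (Λ * D * Λᵀ).PosDef) (hq : q ≠ 0) : Cq Λ D q = Cq Λ D 1 / q := by
  have := invertibleOfNonzero hq
  have hdet : IsUnit (Λ * D * Λᵀ).det := (isUnit_iff_isUnit_det _).1 hΛD.isUnit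
  simp only [Cq, Matrix.mul_smul, Matrix.smul_mul, one_smul]
  rw [Matrix.inv_smul _ q hdet, trace_smul, invOf_eq_inv, smul_eq_mul, inv_mul_eq_div]

theorem Cq_pos (hΛD : (Λ * D * Λᵀ).PosDef) (hq : 0 < q) : 0 < Cq Λ D q := by
  rw [Cq_eq_div hΛD hq.ne']
  simpa [Cq] using div_pos hΛD.inv.trace_pos hq

theorem Cq_le_iff (hΛD : (Λ * D * Λᵀ).PosDef) (hε : 0 < ε) (hq : 0 < q) :
    Cq Λ D q ≤ ε ↔ Cq Λ D 1 / ε ≤ q := by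
  rw [Cq_eq_div hΛD hq.ne', div_le_comm₀ hq hε]

theorem PMinFeas.Cq_one_div (hF : PMinFeas h a Λ D σ2 η ε F q) (hΛD : (Λ * D * Λᵀ).PosDef)
    (hε : 0 < ε) : PMinFeas h a Λ D σ2 η ε F (Cq Λ D 1 / ε) := by
  have hpos : 0 < Cq Λ D 1 / ε := div_pos (Cq_pos hΛD one_pos) hε
  obtain ⟨hpsd, hq, hCq, hsinr, hgain⟩ := hF
  exact ⟨hpsd, hpos, (Cq_le_iff hΛD hε hpos).2 le_rfl, hsinr,
    ((Cq_le_iff hΛD hε hq).1 hCq).trans hgain⟩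

theorem PMinFeas.ne_zero (hF : PMinFeas h a Λ D σ2 η ε F q) (hη : 0 < η) (hσ2 : 0 < σ2)
    (k : Fin K) : F k ≠ 0 := by
  intro hk
  have hinterf : 0 ≤ ∑ j ∈ univ.erase k, (star (h k) ⬝ᵥ F j *ᵥ h k).re :=
    sum_nonneg fun j _ ↦ (Complex.le_def.1 ((hF.1 j).dotProduct_mulVec_nonneg _)).1
  have hsinr := hF.2.2.2.1 k
  rw [hk, zero_mulVec, dotProduct_zero, Complex.zero_re] at hsinr
  exact (mul_pos hη (add_pos_of_nonneg_of_pos hinterf hσ2)).not_ge hsinr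

end PowerMinimization

theorem sdr_tightness_power_min_general {K Nt N : ℕ} (h : Fin K → Fin Nt → ℂ) (a : Fin Nt → ℂ)
    (σ2 P η ε : ℝ) (hσ2 : 0 < σ2) (hP : 0 < P) (hη : 0 < η) (hε : 0 < ε)
    (Λ : Matrix (Fin 2) (Fin N) ℝ) (D : Matrix (Fin N) (Fin N) ℝ) (hΛD : (Λ * D * Λᵀ).PosDef)
    (hfeas : ∃ F q, PMinFeas h a Λ D σ2 η ε F q) :
    ∃ F q, PMinFeas h a Λ D σ2 η ε F q ∧
      (∀ F' q', PMinFeas h a Λ D σ2 η ε F' q' →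
        (∑ k, (F k).trace).re / P ≤ (∑ k, (F' k).trace).re / P) ∧
      ∀ k, (F k).rank = 1 := by
  set q₀ := Cq Λ D 1 / ε
  have hfeas_q₀ {F q} (hF : PMinFeas h a Λ D σ2 η ε F q) : PMinFeas h a Λ D σ2 η ε F q₀ :=
    hF.Cq_one_div hΛD hε
  obtain ⟨F₁, q₁, hF₁⟩ := hfeas
  obtain ⟨hq₀, hCq₀, hF₁_mem⟩ := pMinFeas_iff_mem_sdpFeasible.1 (hfeas_q₀ hF₁)
  obtain ⟨F, hext, hmin⟩ := exists_mem_extremePoints_isMinOn_totalTrace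
    (constraintMap h a η) isClosed_Ici ⟨F₁, hF₁_mem⟩
  have hF : PMinFeas h a Λ D σ2 η ε F q₀ :=
    pMinFeas_iff_mem_sdpFeasible.2 ⟨hq₀, hCq₀, hext.1⟩
  have hrank : ∑ k, (F k).rank ^ 2 ≤ K + 1 := by
    simpa using sum_sq_rank_le_finrank_of_mem_extremePoints hext
  have hrank_ne (k) : (F k).rank ≠ 0 := matrix_rank_eq_zero_iff.not.2 (hF.ne_zero hη hσ2 k)
  refine ⟨F, q₀, hF, fun F' q' hF' ↦ ?_, eq_one_of_sum_sq_lt hrank_ne ?_⟩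
  · have hF'_mem := (pMinFeas_iff_mem_sdpFeasible.1 (hfeas_q₀ hF')).2.2
    exact div_le_div_of_nonneg_right (hmin hF'_mem) hP.le
  · rw [Fintype.card_fin]
    omega

/-- Theorem 3, deterministic form: tightness of the SDR for the single-BS
power-minimization problem: if the SDR is feasible with attained optimum and `ā` does not
lie in the span of the channels, then there is an optimal solution whose matrices all
have rank at most one. -/
theorem sdr_tightness_power_min {K Nt N : ℕ}
    (h : Fin K → Fin Nt → ℂ) (a : Fin Nt → ℂ)
    (σ2 P η ε : ℝ) (hσ2 : 0 < σ2) (hP : 0 < P) (hη : 0 < η) (hε : 0 < ε)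
    (Λ : Matrix (Fin 2) (Fin N) ℝ) (D : Matrix (Fin N) (Fin N) ℝ)
    (hDdiag : D.IsDiag) (hDpd : D.PosDef) (hΛD : (Λ * D * Λᵀ).PosDef)
    -- ā does not lie in the span of { h₁, …, h_K }
    (hspan : star a ∉ Submodule.span ℂ (Set.range h))
    -- the problem is feasible and its optimal value is attained
    (hopt : ∃ (F : Fin K → Matrix (Fin Nt) (Fin Nt) ℂ) (q : ℝ),
        PMinFeas h a Λ D σ2 η ε F q ∧
        ∀ (F' : Fin K → Matrix (Fin Nt) (Fin Nt) ℂ) (q' : ℝ),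
          PMinFeas h a Λ D σ2 η ε F' q' →
            (∑ k, (F k).trace).re / P ≤ (∑ k, (F' k).trace).re / P) :
    ∃ (F : Fin K → Matrix (Fin Nt) (Fin Nt) ℂ) (q : ℝ),
      PMinFeas h a Λ D σ2 η ε F q ∧
      (∀ (F' : Fin K → Matrix (Fin Nt) (Fin Nt) ℂ) (q' : ℝ),
        PMinFeas h a Λ D σ2 η ε F' q' →
          (∑ k, (F k).trace).re / P ≤ (∑ k, (F' k).trace).re / P) ∧
      ∀ k, (F k).rank ≤ 1 := by
  have hfeas := hopt.imp fun _ ↦ Exists.imp fun _ ↦ And.left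
  obtain ⟨F, q, hF, hmin, hrank⟩ :=
    sdr_tightness_power_min_general h a σ2 P η ε hσ2 hP hη hε Λ D hΛD hfeas
  exact ⟨F, q, hF, hmin, fun k ↦ (hrank k).le⟩
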